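/- There exists an absolute constant C > 0 with the following property. In the setting of 1-bit matrix completion under Condition U (F : ℝ → (0,1) differentiable with F, F' nonzero on [−α, α] and L_α, β_α, U_α finite; M* ∈ K_max(α, R); S = ((i₁,j₁), …, (iₙ,jₙ)) i.i.d. from Π with 2 < n ≤ d1 d2; given S, Y_{i_t,j_t} independent ±1 with P(Y_{i_t,j_t}=1) = F(M*_{i_t,j_t}); M̂_max a minimizer of the negative log-likelihood ℓ_S(M; Y) over K_max(α, R)), suppose in addition there is μ ≥ 1 with π_{kl} ≥ 1/(μ d1 d2) for all (k,l) ∈ [d1]×[d2]. Then with probability at least 1 − 4/d, (1/(d1 d2)) ‖M̂_max − M*‖_F² ≤ C μ β_α { L_α R √(d/n) + U_α √( log(d)/n ) }, where d = d1 + d2. -/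

import Mathlib

open scoped BigOperators
open Matrix

/-- The elementwise `ℓ∞`-norm of a matrix: `max_{k,l} |M_{k,l}|`. -/
noncomputable def linfNorm {d1 d2 : ℕ} (M : Matrix (Fin d1) (Fin d2) ℝ) : ℝ :=
  ⨆ k, ⨆ l, |M k l|

/-- The Frobenius norm of a real matrix. -/
noncomputable def frobeniusNorm {d1 d2 : ℕ} (M : Matrix (Fin d1) (Fin d2) ℝ) : ℝ :=
  Real.sqrt (∑ k, ∑ l, (M k l) ^ 2)

/-- The largest `ℓ₂`-norm of a row of a matrix (the `(2,∞)` operator norm). -/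
noncomputable def rowMaxNorm {n k : ℕ} (U : Matrix (Fin n) (Fin k) ℝ) : ℝ :=
  ⨆ i, Real.sqrt (∑ j, (U i j) ^ 2)

/-- The max-norm of a real matrix: the infimum of `‖U‖_{2,∞} ‖V‖_{2,∞}` over all
factorizations `M = U * Vᵀ`. -/
noncomputable def maxNorm {d1 d2 : ℕ} (M : Matrix (Fin d1) (Fin d2) ℝ) : ℝ :=
  sInf { c : ℝ | ∃ (k : ℕ) (U : Matrix (Fin d1) (Fin k) ℝ) (V : Matrix (Fin d2) (Fin k) ℝ),
    0 < k ∧ M = U * Vᵀ ∧ c = rowMaxNorm U * rowMaxNorm V }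

/-- The negative log-likelihood `ℓ_S(M; Y)` of the matrix `M` for observed signs
`y : Fin n → Bool` (`y t = true` encodes `Y_{i_t,j_t} = +1`) at sampled index pairs `S`. -/
noncomputable def negLogLik {d1 d2 n : ℕ} (F : ℝ → ℝ)
    (S : Fin n → Fin d1 × Fin d2) (y : Fin n → Bool)
    (M : Matrix (Fin d1) (Fin d2) ℝ) : ℝ :=
  ∑ t, if y t then Real.log (1 / F (M (S t).1 (S t).2))
    else Real.log (1 / (1 - F (M (S t).1 (S t).2)))

/-- The probability weight of the outcome `(S, y)` under i.i.d. sampling of the index pairs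
from `Π` and, given `S`, independent signs with `P(Y_{i_t,j_t} = 1) = F(M*_{i_t,j_t})`. -/
noncomputable def sampleWeight {d1 d2 n : ℕ} (F : ℝ → ℝ) (π : Fin d1 → Fin d2 → ℝ)
    (Mstar : Matrix (Fin d1) (Fin d2) ℝ)
    (S : Fin n → Fin d1 × Fin d2) (y : Fin n → Bool) : ℝ :=
  ∏ t, π (S t).1 (S t).2 *
    (if y t then F (Mstar (S t).1 (S t).2) else 1 - F (Mstar (S t).1 (S t).2))


/-- sign of a boolean -/
noncomputable def bsgn (b : Bool) : ℝ := if b then 1 else -1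

lemma bsgn_sq (b : Bool) : bsgn b * bsgn b = 1 := by cases b <;> simp [bsgn]

lemma sum_cons_fin {Ω : Type*} [Fintype Ω] (n : ℕ) (g : (Fin (n+1) → Ω) → ℝ) :
    ∑ f, g f = ∑ a, ∑ f : Fin n → Ω, g (Fin.cons a f) := by
  rw [← (Fin.consEquiv (fun _ : Fin (n+1) => Ω)).sum_comp, Fintype.sum_prod_type]
  rfl

lemma rad_inner (k : ℕ) (u v : Fin k → ℝ) :
    ∑ e : Fin k → Bool, (∑ j, u j * bsgn (e j)) * (∑ j, v j * bsgn (e j))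
      = 2 ^ k * ∑ j, u j * v j := by
  induction k with
  | zero => simp
  | succ k ih =>
    rw [sum_cons_fin]
    simp only [Fin.sum_univ_succ, Fin.cons_zero, Fin.cons_succ, Fintype.sum_bool]
    rw [← Finset.sum_add_distrib]
    have := ih (fun j => u j.succ) (fun j => v j.succ)
    have h2 : ∀ e : Fin k → Bool, (u 0 * bsgn true + ∑ x : Fin k, u x.succ * bsgn (e x)) *
          (v 0 * bsgn true + ∑ x : Fin k, v x.succ * bsgn (e x)) +
        (u 0 * bsgn false + ∑ x : Fin k, u x.succ * bsgn (e x)) *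
          (v 0 * bsgn false + ∑ x : Fin k, v x.succ * bsgn (e x))
        = 2 * (u 0 * v 0) + 2 * ((∑ x : Fin k, u x.succ * bsgn (e x)) *
          (∑ x : Fin k, v x.succ * bsgn (e x))) := by
      intro e; simp [bsgn]; ring
    simp only [h2]
    rw [Finset.sum_add_distrib, ← Finset.mul_sum Finset.univ (fun e : Fin k → Bool => (∑ x : Fin k, u x.succ * bsgn (e x)) *
          (∑ x : Fin k, v x.succ * bsgn (e x))) (2:ℝ), this]
    simp; ring

lemma rad_four (k : ℕ) (u : Fin k → ℝ) :
    ∑ e : Fin k → Bool, (∑ j, u j * bsgn (e j)) ^ 4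
      ≤ 3 * 2 ^ k * (∑ j, u j ^ 2) ^ 2 := by
  induction k with
  | zero => simp
  | succ k ih =>
    rw [sum_cons_fin]
    simp only [Fin.sum_univ_succ, Fin.cons_zero, Fin.cons_succ, Fintype.sum_bool]
    rw [← Finset.sum_add_distrib]
    have h4 := ih (fun j => u j.succ)
    have hin := rad_inner k (fun j => u j.succ) (fun j => u j.succ)
    have h2 : ∀ e : Fin k → Bool, (u 0 * bsgn true + ∑ x : Fin k, u x.succ * bsgn (e x)) ^ 4 +
        (u 0 * bsgn false + ∑ x : Fin k, u x.succ * bsgn (e x)) ^ 4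
        = 2 * (u 0) ^ 4 + 12 * u 0 ^ 2 * ((∑ x : Fin k, u x.succ * bsgn (e x)) *
          (∑ x : Fin k, u x.succ * bsgn (e x))) + 2 * (∑ x : Fin k, u x.succ * bsgn (e x)) ^ 4 := by
      intro e; simp [bsgn]; ring
    simp only [h2]
    rw [Finset.sum_add_distrib, Finset.sum_add_distrib,
      ← Finset.mul_sum Finset.univ (fun e : Fin k → Bool => (∑ x : Fin k, u x.succ * bsgn (e x)) *
          (∑ x : Fin k, u x.succ * bsgn (e x))) (12 * u 0 ^ 2),
      ← Finset.mul_sum Finset.univ (fun e : Fin k → Bool =>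
          (∑ x : Fin k, u x.succ * bsgn (e x)) ^ 4) (2:ℝ), hin]
    simp only [Finset.sum_const, Finset.card_univ, Fintype.card_pi, Fintype.card_bool,
      Finset.prod_const, Fintype.card_fin, nsmul_eq_mul]
    have : ∑ j : Fin k, u j.succ * u j.succ = ∑ j : Fin k, u j.succ ^ 2 :=
      Finset.sum_congr rfl fun _ _ => by ring
    rw [this]
    set s := ∑ j : Fin k, u j.succ ^ 2
    push_cast
    have h0 : (0:ℝ) ≤ 2 ^ k * u 0 ^ 4 := by positivity
    rw [pow_succ (2:ℝ) k]
    nlinarith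

/-- bilinear value -/
noncomputable def bval {m n : ℕ} (A : Fin m → Fin n → ℝ) {κ : Type} [Fintype κ]
    (U : Fin m → κ → ℝ) (V : Fin n → κ → ℝ) : ℝ :=
  ∑ i, ∑ j, A i j * ∑ q, U i q * V j q

lemma lin_sign {n : ℕ} (c : Fin n → ℝ) (T : ℝ) (y : Fin n → ℝ) (hy : ∀ l, |y l| ≤ T) :
    ∑ l, y l * c l ≤ T * ∑ l, bsgn (decide (0 ≤ c l)) * c l := by
  rw [Finset.mul_sum]
  refine Finset.sum_le_sum fun l _ => ?_
  have h1 : bsgn (decide (0 ≤ c l)) * c l = |c l| := by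
    by_cases h : 0 ≤ c l
    · simp [bsgn, h, abs_of_nonneg h]
    · push Not at h
      simp [bsgn, not_le.mpr h, abs_of_neg h]
  rw [h1]
  calc y l * c l ≤ |y l * c l| := le_abs_self _
    _ = |y l| * |c l| := abs_mul _ _
    _ ≤ T * |c l| := mul_le_mul_of_nonneg_right (hy l) (abs_nonneg _)

lemma sign_ext {m n : ℕ} (A : Fin m → Fin n → ℝ) (B T : ℝ) (hT : 0 ≤ T)
    (hB : ∀ (s : Fin m → Bool) (t : Fin n → Bool),
      ∑ i, ∑ j, A i j * (bsgn (s i) * bsgn (t j)) ≤ B)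
    (x : Fin m → ℝ) (y : Fin n → ℝ) (hx : ∀ i, |x i| ≤ T) (hy : ∀ j, |y j| ≤ T) :
    ∑ i, ∑ j, A i j * (x i * y j) ≤ T * (T * B) := by
  have e1 : ∑ i, ∑ j, A i j * (x i * y j) = ∑ i, x i * ∑ j, A i j * y j := by
    refine Finset.sum_congr rfl fun i _ => ?_
    rw [Finset.mul_sum]
    exact Finset.sum_congr rfl fun j _ => by ring
  rw [e1]
  refine (lin_sign _ T x hx).trans ?_
  set s : Fin m → Bool := fun i => decide (0 ≤ ∑ j, A i j * y j) with hs
  refine mul_le_mul_of_nonneg_left ?_ hT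
  have e2 : ∑ l, bsgn (decide (0 ≤ ∑ j, A l j * y j)) * ∑ j, A l j * y j
      = ∑ j, y j * ∑ i, bsgn (s i) * A i j := by
    simp only [Finset.mul_sum]
    rw [Finset.sum_comm]
    exact Finset.sum_congr rfl fun j _ => Finset.sum_congr rfl fun i _ => by simp only [hs]; ring
  rw [e2]
  refine (lin_sign _ T y hy).trans ?_
  refine mul_le_mul_of_nonneg_left ?_ hT
  refine le_trans (le_of_eq ?_) (hB s (fun j => decide (0 ≤ ∑ i, bsgn (s i) * A i j)))
  simp only [Finset.mul_sum]
  rw [Finset.sum_comm]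
  exact Finset.sum_congr rfl fun j _ => Finset.sum_congr rfl fun i _ => by ring

/-- set of values -/
def gset {m n : ℕ} (A : Fin m → Fin n → ℝ) : Set ℝ :=
  {c | ∃ (k : ℕ) (U : Fin m → Fin k → ℝ) (V : Fin n → Fin k → ℝ),
    (∀ i, ∑ q, U i q ^ 2 ≤ 1) ∧ (∀ j, ∑ q, V j q ^ 2 ≤ 1) ∧ c = bval A U V}

lemma inner_abs {κ : Type} [Fintype κ] (u v : κ → ℝ) (a b : ℝ) (hu : ∑ q, u q ^ 2 ≤ a)
    (hv : ∑ q, v q ^ 2 ≤ b) : |∑ q, u q * v q| ≤ √a * √b := by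
  have h := Finset.sum_mul_sq_le_sq_mul_sq Finset.univ u v
  have h0 : 0 ≤ ∑ q, u q ^ 2 := Finset.sum_nonneg fun _ _ => sq_nonneg _
  have h0' : 0 ≤ ∑ q, v q ^ 2 := Finset.sum_nonneg fun _ _ => sq_nonneg _
  rw [← Real.sqrt_mul (h0.trans hu)]
  apply Real.abs_le_sqrt
  exact h.trans (mul_le_mul hu hv h0' (h0.trans hu))

lemma gset_bdd {m n : ℕ} (A : Fin m → Fin n → ℝ) : BddAbove (gset A) := by
  refine ⟨∑ i, ∑ j, |A i j|, ?_⟩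
  rintro c ⟨k, U, V, hU, hV, rfl⟩
  refine Finset.sum_le_sum fun i _ => Finset.sum_le_sum fun j _ => ?_
  have h := inner_abs (U i) (V j) 1 1 (hU i) (hV j)
  simp only [Real.sqrt_one, mul_one] at h
  calc _ ≤ |A i j * ∑ q, U i q * V j q| := le_abs_self _
    _ = |A i j| * |∑ q, U i q * V j q| := abs_mul _ _
    _ ≤ |A i j| * 1 := mul_le_mul_of_nonneg_left h (abs_nonneg _)
    _ = _ := mul_one _

lemma gset_zero {m n : ℕ} (A : Fin m → Fin n → ℝ) : (0:ℝ) ∈ gset A :=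
  ⟨0, fun _ _ => 0, fun _ _ => 0, by simp, by simp, by simp [bval]⟩

lemma g_nonneg {m n : ℕ} (A : Fin m → Fin n → ℝ) : 0 ≤ sSup (gset A) :=
  le_csSup (gset_bdd A) (gset_zero A)

/-- homogeneity, general finite index type -/
lemma g_hom {m n : ℕ} (A : Fin m → Fin n → ℝ) {κ : Type} [Fintype κ]
    (U : Fin m → κ → ℝ) (V : Fin n → κ → ℝ) (a b : ℝ)
    (hU : ∀ i, ∑ q, U i q ^ 2 ≤ a) (hV : ∀ j, ∑ q, V j q ^ 2 ≤ b) :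
    bval A U V ≤ √a * √b * sSup (gset A) := by
  by_cases hab : 0 < a ∧ 0 < b
  · obtain ⟨ha, hb⟩ := hab
    have sa := Real.sqrt_pos.mpr ha
    have sb := Real.sqrt_pos.mpr hb
    have key : bval A U V / (√a * √b) ∈ gset A := by
      let e := Fintype.equivFin κ
      refine ⟨Fintype.card κ, fun i q => U i (e.symm q) / √a, fun j q => V j (e.symm q) / √b,
        fun i => ?_, fun j => ?_, ?_⟩
      · rw [e.symm.sum_comp (fun q => (U i q / √a) ^ 2)]
        simp only [div_pow, Real.sq_sqrt ha.le]
        rw [← Finset.sum_div, div_le_one ha]; exact hU i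
      · rw [e.symm.sum_comp (fun q => (V j q / √b) ^ 2)]
        simp only [div_pow, Real.sq_sqrt hb.le]
        rw [← Finset.sum_div, div_le_one hb]; exact hV j
      · unfold bval
        rw [Finset.sum_div]
        refine Finset.sum_congr rfl fun i _ => ?_
        rw [Finset.sum_div]
        refine Finset.sum_congr rfl fun j _ => ?_
        rw [e.symm.sum_comp (fun q => (U i q / √a) * (V j q / √b)), mul_div_assoc, Finset.sum_div]
        congr 1
        refine Finset.sum_congr rfl fun q _ => ?_
        field_simp
    have := le_csSup (gset_bdd A) key
    rw [div_le_iff₀ (by positivity)] at this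
    linarith
  · have hz : √a * √b = 0 := by
      rcases not_and_or.mp hab with h | h
      · rw [Real.sqrt_eq_zero_of_nonpos (not_lt.mp h), zero_mul]
      · rw [Real.sqrt_eq_zero_of_nonpos (not_lt.mp h), mul_zero]
    rw [hz, zero_mul]
    unfold bval
    refine le_of_eq (Finset.sum_eq_zero fun i _ => Finset.sum_eq_zero fun j _ => ?_)
    have h := inner_abs (U i) (V j) a b (hU i) (hV j)
    rw [hz] at h
    rw [abs_nonpos_iff.mp h, mul_zero]

lemma bval_add_left {m n : ℕ} (A : Fin m → Fin n → ℝ) {κ : Type} [Fintype κ]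
    (U U' : Fin m → κ → ℝ) (V : Fin n → κ → ℝ) :
    bval A (fun i q => U i q + U' i q) V = bval A U V + bval A U' V := by
  simp only [bval, add_mul, mul_add, Finset.sum_add_distrib]

lemma bval_add_right {m n : ℕ} (A : Fin m → Fin n → ℝ) {κ : Type} [Fintype κ]
    (U : Fin m → κ → ℝ) (V V' : Fin n → κ → ℝ) :
    bval A U (fun i q => V i q + V' i q) = bval A U V + bval A U V' := by
  simp only [bval, mul_add, Finset.sum_add_distrib]

/-- truncation -/
noncomputable def trn (x : ℝ) : ℝ := if x ^ 2 ≤ 48 then x else 0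

lemma trn_abs (x : ℝ) : |trn x| ≤ √48 := by
  unfold trn; split_ifs with h
  · exact Real.abs_le_sqrt h
  · simp

lemma trn_sq (x : ℝ) : trn x ^ 2 ≤ x ^ 2 := by
  unfold trn; split_ifs with h
  · exact le_rfl
  · simp; positivity

lemma trn_res (x : ℝ) : (x - trn x) ^ 2 ≤ x ^ 4 / 48 := by
  unfold trn; split_ifs with h
  · simp; positivity
  · push Not at h
    rw [sub_zero, le_div_iff₀ (by norm_num)]
    nlinarith [sq_nonneg x]

/-- Grothendieck inequality -/
lemma groth {m n : ℕ} (A : Fin m → Fin n → ℝ) (B : ℝ)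
    (hB : ∀ (s : Fin m → Bool) (t : Fin n → Bool),
      ∑ i, ∑ j, A i j * (bsgn (s i) * bsgn (t j)) ≤ B) :
    sSup (gset A) ≤ 96 * B := by
  set g := sSup (gset A) with hg
  suffices h : g ≤ 48 * B + g / 2 by linarith
  refine csSup_le ⟨0, gset_zero A⟩ ?_
  rintro c ⟨k, U, V, hU, hV, rfl⟩
  let X : Fin m → (Fin k → Bool) → ℝ := fun i e => ∑ j, U i j * bsgn (e j)
  let Y : Fin n → (Fin k → Bool) → ℝ := fun i e => ∑ j, V i j * bsgn (e j)
  have hk : (0:ℝ) < 2 ^ k := by positivity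
  have hXY : bval A X Y = 2 ^ k * bval A U V := by
    simp only [bval, Finset.mul_sum]
    refine Finset.sum_congr rfl fun i _ => Finset.sum_congr rfl fun j _ => ?_
    rw [← Finset.mul_sum, rad_inner]
    simp only [Finset.mul_sum]
    exact Finset.sum_congr rfl fun _ _ => by ring
  have sq2 : ∀ u : Fin k → ℝ, ∑ j, u j ^ 2 ≤ 1 →
      ∑ e : Fin k → Bool, (∑ j, u j * bsgn (e j)) ^ 2 ≤ 2 ^ k := by
    intro u hu
    have := rad_inner k u u
    simp only [← pow_two] at this
    rw [this]
    nlinarith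
  have sq4 : ∀ u : Fin k → ℝ, ∑ j, u j ^ 2 ≤ 1 →
      ∑ e : Fin k → Bool, ((∑ j, u j * bsgn (e j)) - trn (∑ j, u j * bsgn (e j))) ^ 2
        ≤ 2 ^ k / 16 := by
    intro u hu
    calc _ ≤ ∑ e : Fin k → Bool, (∑ j, u j * bsgn (e j)) ^ 4 / 48 :=
          Finset.sum_le_sum fun e _ => trn_res _
      _ = (∑ e : Fin k → Bool, (∑ j, u j * bsgn (e j)) ^ 4) / 48 := by rw [Finset.sum_div]
      _ ≤ (3 * 2 ^ k * (∑ j, u j ^ 2) ^ 2) / 48 := by gcongr; exact rad_four k u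
      _ ≤ (3 * 2 ^ k * 1) / 48 := by
          gcongr
          have : 0 ≤ ∑ j, u j ^ 2 := Finset.sum_nonneg fun _ _ => sq_nonneg _
          nlinarith
      _ = _ := by ring
  have d1 : bval A X Y = bval A (fun i e => trn (X i e)) (fun j e => trn (Y j e))
      + bval A (fun i e => trn (X i e)) (fun j e => Y j e - trn (Y j e))
      + bval A (fun i e => X i e - trn (X i e)) Y := by
    rw [← bval_add_right, ]
    simp only [add_sub_cancel]
    rw [← bval_add_left]
    simp only [add_sub_cancel]
  have t1 : bval A (fun i e => trn (X i e)) (fun j e => trn (Y j e)) ≤ 2 ^ k * (48 * B) := by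
    have e1 : bval A (fun i e => trn (X i e)) (fun j e => trn (Y j e))
        = ∑ e : Fin k → Bool, ∑ i, ∑ j, A i j * (trn (X i e) * trn (Y j e)) := by
      simp only [bval, Finset.mul_sum]
      rw [Finset.sum_comm (γ := Fin k → Bool)]
      exact Finset.sum_congr rfl fun i _ => Finset.sum_comm
    rw [e1]
    have : ∀ e : Fin k → Bool, ∑ i, ∑ j, A i j * (trn (X i e) * trn (Y j e)) ≤ 48 * B := by
      intro e
      refine (sign_ext A B (√48) (Real.sqrt_nonneg _) hB _ _ (fun i => trn_abs _)
        (fun i => trn_abs _)).trans (le_of_eq ?_)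
      rw [← mul_assoc, Real.mul_self_sqrt (by norm_num)]
    refine (Finset.sum_le_sum fun e _ => this e).trans (le_of_eq ?_)
    simp
  have sq16 : √((2:ℝ) ^ k) * √((2:ℝ) ^ k / 16) = 2 ^ k / 4 := by
    rw [← Real.sqrt_mul hk.le, show (2:ℝ) ^ k * (2 ^ k / 16) = (2 ^ k / 4) ^ 2 by ring,
      Real.sqrt_sq (by positivity)]
  have t2 : bval A (fun i e => trn (X i e)) (fun j e => Y j e - trn (Y j e)) ≤ 2 ^ k / 4 * g := by
    rw [← sq16]
    exact g_hom A _ _ _ _ (fun i => (Finset.sum_le_sum fun e _ => trn_sq _).trans (sq2 _ (hU i)))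
      (fun j => sq4 _ (hV j))
  have t3 : bval A (fun i e => X i e - trn (X i e)) Y ≤ 2 ^ k / 4 * g := by
    rw [← sq16, mul_comm (√_)]
    exact g_hom A _ _ _ _ (fun i => sq4 _ (hU i)) (fun j => sq2 _ (hV j))
  have : 2 ^ k * bval A U V ≤ 2 ^ k * (48 * B + g / 2) := by
    rw [← hXY, d1]; linarith
  exact le_of_mul_le_mul_left this hk
/-- finite maximum -/
noncomputable def mx {ι : Type*} [Fintype ι] [Nonempty ι] (f : ι → ℝ) : ℝ :=
  Finset.univ.sup' Finset.univ_nonempty f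

lemma le_mx {ι : Type*} [Fintype ι] [Nonempty ι] (f : ι → ℝ) (i : ι) : f i ≤ mx f :=
  Finset.le_sup' f (Finset.mem_univ i)

lemma mx_le {ι : Type*} [Fintype ι] [Nonempty ι] (f : ι → ℝ) (c : ℝ) (h : ∀ i, f i ≤ c) :
    mx f ≤ c := Finset.sup'_le _ _ fun i _ => h i

lemma mx_att {ι : Type*} [Fintype ι] [Nonempty ι] (f : ι → ℝ) : ∃ i, mx f = f i := by
  obtain ⟨i, _, h⟩ := Finset.exists_mem_eq_sup' (s := Finset.univ) Finset.univ_nonempty f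
  exact ⟨i, h⟩

lemma exp_gap (a b u v : ℝ) (h0 : 0 ≤ u) (huv : u ≤ v) (hab : a ≤ b) :
    Real.exp (a + u) + Real.exp b ≤ Real.exp (b + v) + Real.exp a := by
  rw [Real.exp_add, Real.exp_add]
  have h1 : Real.exp a ≤ Real.exp b := Real.exp_le_exp.mpr hab
  have h2 : Real.exp u ≤ Real.exp v := Real.exp_le_exp.mpr huv
  have h3 : 1 ≤ Real.exp u := Real.one_le_exp h0
  nlinarith [Real.exp_pos a, Real.exp_pos b]

lemma contr_pos (a b x y p q P Q : ℝ) (hp : |p| ≤ |x|) (hq : |q| ≤ |y|)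
    (hpq : |p - q| ≤ |x - y|) (h1 : a + x ≤ P) (h2 : b + y ≤ P) (h3 : a - x ≤ Q)
    (h4 : b - y ≤ Q) (hx : 0 ≤ x) (hy : 0 ≤ y) :
    Real.exp (a + p) + Real.exp (b - q) ≤ Real.exp P + Real.exp Q := by
  rw [abs_of_nonneg hx] at hp
  rw [abs_of_nonneg hy] at hq
  rw [abs_le] at hp hq hpq
  rcases le_total y x with hxy | hxy
  · rw [abs_of_nonneg (by linarith)] at hpq
    by_cases hc : b - y ≤ a + p
    · have := exp_gap (b - y) (a + p) (y - q) (x - p) (by linarith) (by linarith) hc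
      have e1 : b - y + (y - q) = b - q := by ring
      have e2 : a + p + (x - p) = a + x := by ring
      rw [e1, e2] at this
      have := Real.exp_le_exp.mpr h1
      have := Real.exp_le_exp.mpr h4
      linarith
    · have := Real.exp_le_exp.mpr (show a + p ≤ Q by linarith)
      have := Real.exp_le_exp.mpr (show b - q ≤ P by linarith)
      linarith
  · rw [abs_of_nonpos (by linarith)] at hpq
    by_cases hc : a - x ≤ b - q
    · have := exp_gap (a - x) (b - q) (p + x) (y + q) (by linarith) (by linarith) hc
      have e1 : a - x + (p + x) = a + p := by ring
      have e2 : b - q + (y + q) = b + y := by ring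
      rw [e1, e2] at this
      have := Real.exp_le_exp.mpr h2
      have := Real.exp_le_exp.mpr h3
      linarith
    · have := Real.exp_le_exp.mpr (show a + p ≤ P by linarith)
      have := Real.exp_le_exp.mpr (show b - q ≤ Q by linarith)
      linarith

lemma contr_two (a b x y p q P Q : ℝ) (hp : |p| ≤ |x|) (hq : |q| ≤ |y|)
    (hpq : |p - q| ≤ |x - y|) (h1 : a + x ≤ P) (h2 : b + y ≤ P) (h3 : a - x ≤ Q)
    (h4 : b - y ≤ Q) :
    Real.exp (a + p) + Real.exp (b - q) ≤ Real.exp P + Real.exp Q := by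
  rcases le_total 0 x with hx | hx <;> rcases le_total 0 y with hy | hy
  · exact contr_pos a b x y p q P Q hp hq hpq h1 h2 h3 h4 hx hy
  · rw [abs_of_nonneg hx, abs_le] at hp
    rw [abs_of_nonpos hy, abs_le] at hq
    have := Real.exp_le_exp.mpr (show a + p ≤ P by linarith)
    have := Real.exp_le_exp.mpr (show b - q ≤ Q by linarith)
    linarith
  · rw [abs_of_nonpos hx, abs_le] at hp
    rw [abs_of_nonneg hy, abs_le] at hq
    have := Real.exp_le_exp.mpr (show a + p ≤ Q by linarith)
    have := Real.exp_le_exp.mpr (show b - q ≤ P by linarith)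
    linarith
  · have := contr_pos a b (-x) (-y) p q Q P (by rwa [abs_neg]) (by rwa [abs_neg])
      (by rw [show -x - -y = -(x - y) by ring, abs_neg]; exact hpq)
      (by linarith) (by linarith) (by linarith) (by linarith) (by linarith) (by linarith)
    linarith

lemma contr_mx {ι : Type*} [Fintype ι] [Nonempty ι] (a h x : ι → ℝ)
    (h1 : ∀ i, |h i| ≤ |x i|) (h2 : ∀ i j, |h i - h j| ≤ |x i - x j|) :
    Real.exp (mx fun i => a i + h i) + Real.exp (mx fun i => a i - h i) ≤
    Real.exp (mx fun i => a i + x i) + Real.exp (mx fun i => a i - x i) := by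
  obtain ⟨i, hi⟩ := mx_att (fun i => a i + h i)
  obtain ⟨j, hj⟩ := mx_att (fun i => a i - h i)
  rw [hi, hj]
  exact contr_two (a i) (a j) (x i) (x j) (h i) (h j) _ _ (h1 i) (h1 j) (h2 i j)
    (le_mx (fun i => a i + x i) i) (le_mx (fun i => a i + x i) j)
    (le_mx (fun i => a i - x i) i) (le_mx (fun i => a i - x i) j)

/-- Convexity of `exp (mx ·)` at midpoints. -/
lemma exp_mx_mid {ι : Type*} [Fintype ι] [Nonempty ι] (u v : ι → ℝ) :
    Real.exp (mx fun i => (u i + v i) / 2) ≤ (Real.exp (mx u) + Real.exp (mx v)) / 2 := by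
  have h : mx (fun i => (u i + v i) / 2) ≤ (mx u + mx v) / 2 :=
    mx_le _ _ fun i => by have := le_mx u i; have := le_mx v i; linarith
  refine (Real.exp_le_exp.mpr h).trans ?_
  have e1 : Real.exp (mx u) = Real.exp (mx u / 2) ^ 2 := by rw [← Real.exp_nat_mul]; congr 1; push_cast; ring
  have e2 : Real.exp (mx v) = Real.exp (mx v / 2) ^ 2 := by rw [← Real.exp_nat_mul]; congr 1; push_cast; ring
  rw [e1, e2, add_div, Real.exp_add]
  nlinarith [sq_nonneg (Real.exp (mx u / 2) - Real.exp (mx v / 2))]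

/-- Jensen. -/
lemma exp_mx_jensen {ι Ω : Type*} [Fintype ι] [Nonempty ι] [Fintype Ω] (p : Ω → ℝ)
    (hp : ∀ w, 0 ≤ p w) (hs : ∑ w, p w = 1) (u : ι → Ω → ℝ) :
    Real.exp (mx fun i => ∑ w, p w * u i w) ≤ ∑ w, p w * Real.exp (mx fun i => u i w) := by
  have h : (mx fun i => ∑ w, p w * u i w) ≤ ∑ w, p w * mx fun i => u i w :=
    mx_le _ _ fun i => Finset.sum_le_sum fun w _ =>
      mul_le_mul_of_nonneg_left (le_mx (fun i => u i w) i) (hp w)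
  refine (Real.exp_le_exp.mpr h).trans ?_
  have := convexOn_exp.map_sum_le (t := Finset.univ) (w := p) (p := fun w => mx fun i => u i w)
    (fun w _ => hp w) hs (fun _ _ => Set.mem_univ _)
  simpa using this

lemma step_one {ι Ω : Type*} [Fintype ι] [Nonempty ι] [Fintype Ω] (p : Ω → ℝ)
    (hp : ∀ w, 0 ≤ p w) (hs : ∑ w, p w = 1) (a : ι → ℝ) (h x : ι → Ω → ℝ)
    (h1 : ∀ w i, |h i w| ≤ |x i w|) (h2 : ∀ w i j, |h i w - h j w| ≤ |x i w - x j w|) :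
    ∑ w, p w * Real.exp (mx fun i => a i + (∑ v, p v * h i v - h i w)) ≤
    ∑ w, p w * ((Real.exp (mx fun i => a i + 2 * x i w) +
      Real.exp (mx fun i => a i - 2 * x i w)) / 2) := by
  have j1 : ∀ w, Real.exp (mx fun i => a i + (∑ v, p v * h i v - h i w)) ≤
      ∑ v, p v * Real.exp (mx fun i => a i + (h i v - h i w)) := by
    intro w
    refine le_trans (le_of_eq ?_) (exp_mx_jensen p hp hs fun i v => a i + (h i v - h i w))
    congr 2; funext i
    simp only [mul_add, mul_sub, Finset.sum_add_distrib, Finset.sum_sub_distrib, ← Finset.sum_mul,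
      hs, one_mul]
  have m : ∀ w v, Real.exp (mx fun i => a i + (h i v - h i w)) ≤
      (Real.exp (mx fun i => a i + 2 * h i v) + Real.exp (mx fun i => a i - 2 * h i w)) / 2 := by
    intro w v
    refine le_trans (le_of_eq ?_) (exp_mx_mid _ _)
    congr 2; funext i; ring
  calc _ ≤ ∑ w, p w * ∑ v, p v * ((Real.exp (mx fun i => a i + 2 * h i v) +
          Real.exp (mx fun i => a i - 2 * h i w)) / 2) := by
        refine Finset.sum_le_sum fun w _ => mul_le_mul_of_nonneg_left ((j1 w).trans ?_) (hp w)
        exact Finset.sum_le_sum fun v _ => mul_le_mul_of_nonneg_left (m w v) (hp v)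
    _ = ∑ w, p w * ((Real.exp (mx fun i => a i + 2 * h i w) +
      Real.exp (mx fun i => a i - 2 * h i w)) / 2) := by
        simp only [add_div, mul_add, Finset.sum_add_distrib, ← Finset.sum_mul, hs, one_mul]
    _ ≤ _ := by
        refine Finset.sum_le_sum fun w _ => mul_le_mul_of_nonneg_left ?_ (hp w)
        have := contr_mx a (fun i => 2 * h i w) (fun i => 2 * x i w)
          (fun i => by simp only [abs_mul]; have := h1 w i; gcongr)
          (fun i j => by simp only [← mul_sub, abs_mul]; have := h2 w i j; gcongr)
        linarith

lemma symm_contr {ι Ω : Type*} [Fintype ι] [Nonempty ι] [Fintype Ω] (p : Ω → ℝ)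
    (hp : ∀ w, 0 ≤ p w) (hs : ∑ w, p w = 1) (h x : ι → Ω → ℝ)
    (h1 : ∀ w i, |h i w| ≤ |x i w|) (h2 : ∀ w i j, |h i w - h j w| ≤ |x i w - x j w|) (n : ℕ) :
    ∀ a : ι → ℝ,
    ∑ w : Fin n → Ω, (∏ t, p (w t)) *
      Real.exp (mx fun i => a i + ∑ t, (∑ v, p v * h i v - h i (w t))) ≤
    ∑ w : Fin n → Ω, (∏ t, p (w t)) * ∑ e : Fin n → Bool, (1/2) ^ n *
      Real.exp (mx fun i => a i + 2 * ∑ t, bsgn (e t) * x i (w t)) := by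
  induction n with
  | zero => intro a; simp
  | succ n ih =>
    intro a
    rw [sum_cons_fin, sum_cons_fin]
    simp only [Fin.prod_univ_succ, Fin.sum_univ_succ, Fin.cons_zero, Fin.cons_succ]
    calc _ = ∑ w0, p w0 * ∑ w : Fin n → Ω, (∏ t, p (w t)) *
          Real.exp (mx fun i => (a i + (∑ v, p v * h i v - h i w0)) +
            ∑ t, (∑ v, p v * h i v - h i (w t))) := by
          refine Finset.sum_congr rfl fun w0 _ => ?_
          rw [Finset.mul_sum]
          refine Finset.sum_congr rfl fun w _ => ?_
          rw [mul_assoc]; simp only [add_assoc]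
      _ ≤ ∑ w0, p w0 * ∑ w : Fin n → Ω, (∏ t, p (w t)) * ∑ e : Fin n → Bool, (1/2) ^ n *
          Real.exp (mx fun i => (a i + (∑ v, p v * h i v - h i w0)) +
            2 * ∑ t, bsgn (e t) * x i (w t)) :=
          Finset.sum_le_sum fun w0 _ => mul_le_mul_of_nonneg_left (ih _) (hp w0)
      _ = ∑ w : Fin n → Ω, (∏ t, p (w t)) * ∑ e : Fin n → Bool, (1/2) ^ n *
          ∑ w0, p w0 * Real.exp (mx fun i => (a i + 2 * ∑ t, bsgn (e t) * x i (w t)) +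
            (∑ v, p v * h i v - h i w0)) := by
          simp only [Finset.mul_sum]
          rw [Finset.sum_comm]
          refine Finset.sum_congr rfl fun w _ => ?_
          rw [Finset.sum_comm]
          refine Finset.sum_congr rfl fun e _ => ?_
          refine Finset.sum_congr rfl fun w0 _ => ?_
          simp only [add_right_comm, ← Finset.mul_sum]
          ring
      _ ≤ ∑ w : Fin n → Ω, (∏ t, p (w t)) * ∑ e : Fin n → Bool, (1/2) ^ n *
          ∑ w0, p w0 * ((Real.exp (mx fun i => (a i + 2 * ∑ t, bsgn (e t) * x i (w t)) +
            2 * x i w0) + Real.exp (mx fun i => (a i + 2 * ∑ t, bsgn (e t) * x i (w t)) -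
            2 * x i w0)) / 2) := by
          refine Finset.sum_le_sum fun w _ => mul_le_mul_of_nonneg_left ?_
            (Finset.prod_nonneg fun t _ => hp _)
          refine Finset.sum_le_sum fun e _ => mul_le_mul_of_nonneg_left ?_ (by positivity)
          exact step_one p hp hs _ h x h1 h2
      _ = _ := by
          have e1 : ∀ (w0 : Ω) (w : Fin n → Ω) , ∑ e : Fin (n+1) → Bool, (1/2 : ℝ) ^ (n+1) *
              Real.exp (mx fun i => a i + 2 * (bsgn (e 0) * x i w0 +
                ∑ t : Fin n, bsgn (e t.succ) * x i (w t))) =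
              ∑ e : Fin n → Bool, (1/2) ^ n *
                ((Real.exp (mx fun i => (a i + 2 * ∑ t, bsgn (e t) * x i (w t)) +
            2 * x i w0) + Real.exp (mx fun i => (a i + 2 * ∑ t, bsgn (e t) * x i (w t)) -
            2 * x i w0)) / 2) := by
            intro w0 w
            rw [sum_cons_fin]
            simp only [Fintype.sum_bool, Fin.cons_zero, Fin.cons_succ]
            rw [← Finset.sum_add_distrib]
            refine Finset.sum_congr rfl fun e _ => ?_
            have a1 : (fun i => a i + 2 * (bsgn true * x i w0 + ∑ t : Fin n, bsgn (e t) * x i (w t)))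
              = (fun i => (a i + 2 * ∑ t, bsgn (e t) * x i (w t)) + 2 * x i w0) := by
              funext i; simp [bsgn]; ring
            have a2 : (fun i => a i + 2 * (bsgn false * x i w0 + ∑ t : Fin n, bsgn (e t) * x i (w t)))
              = (fun i => (a i + 2 * ∑ t, bsgn (e t) * x i (w t)) - 2 * x i w0) := by
              funext i; simp [bsgn]; ring
            rw [a1, a2]; ring
          simp only [e1]
          simp only [Finset.mul_sum]
          rw [Finset.sum_comm (γ := Ω)]
          refine Finset.sum_congr rfl fun w _ => ?_
          rw [Finset.sum_comm]
          refine Finset.sum_congr rfl fun e _ => ?_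
          refine Finset.sum_congr rfl fun w0 _ => ?_
          simp only [← Finset.mul_sum]
          ring

lemma rad_mgf (n : ℕ) (c : ℝ) : ∀ b : Fin n → ℝ, (∀ t, b t ^ 2 = 1) →
    ∑ e : Fin n → Bool, (1/2) ^ n * Real.exp (c * ∑ t, bsgn (e t) * b t) ≤
      Real.exp (n * c ^ 2 / 2) := by
  induction n with
  | zero => intro b _; simp
  | succ n ih =>
    intro b hb
    rw [sum_cons_fin]
    simp only [Fin.sum_univ_succ, Fin.cons_zero, Fin.cons_succ, Fintype.sum_bool]
    have key := ih (fun t => b t.succ) (fun t => hb _)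
    have e1 : ∀ q : Bool, ∑ e : Fin n → Bool, (1/2 : ℝ) ^ (n+1) *
        Real.exp (c * (bsgn q * b 0 + ∑ t : Fin n, bsgn (e t) * b t.succ)) =
        (1/2) * Real.exp (c * (bsgn q * b 0)) * ∑ e : Fin n → Bool, (1/2 : ℝ) ^ n *
          Real.exp (c * ∑ t : Fin n, bsgn (e t) * b t.succ) := by
      intro q
      rw [Finset.mul_sum]
      refine Finset.sum_congr rfl fun e _ => ?_
      rw [mul_add, Real.exp_add]; ring
    rw [e1, e1, ← add_mul]
    have e2 : 1 / 2 * Real.exp (c * (bsgn true * b 0)) + 1 / 2 * Real.exp (c * (bsgn false * b 0))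
        = Real.cosh (c * b 0) := by
      rw [Real.cosh_eq]; simp [bsgn]; ring
    rw [e2]
    have e3 := Real.cosh_le_exp_half_sq (c * b 0)
    calc _ ≤ Real.exp ((c * b 0) ^ 2 / 2) * Real.exp (n * c ^ 2 / 2) :=
          mul_le_mul e3 key (Finset.sum_nonneg fun _ _ => by positivity) (Real.exp_pos _).le
      _ = _ := by
          rw [← Real.exp_add, mul_pow, hb 0]; congr 1; push_cast; ring
/-- per-sample loss -/
noncomputable def fl (F : ℝ → ℝ) (b : Bool) (x : ℝ) : ℝ :=
  if b then Real.log (1 / F x) else Real.log (1 / (1 - F x))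

lemma fl_lip (F : ℝ → ℝ) (α L : ℝ) (hd : Differentiable ℝ F) (hF : ∀ x, 0 < F x ∧ F x < 1)
    (hL : IsLUB ((fun x => |deriv F x| / (F x * (1 - F x))) '' Set.Icc (-α) α) L)
    (b : Bool) (x y : ℝ) (hx : x ∈ Set.Icc (-α) α) (hy : y ∈ Set.Icc (-α) α) :
    |fl F b x - fl F b y| ≤ L * |x - y| := by
  have hL' : ∀ x ∈ Set.Icc (-α) α, |deriv F x| / (F x * (1 - F x)) ≤ L :=
    fun x hx => hL.1 ⟨x, hx, rfl⟩
  have key : ∀ z ∈ Set.Icc (-α) α, ∃ d, HasDerivAt (fl F b) d z ∧ |d| ≤ L := by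
    intro z hz
    obtain ⟨h0, h1⟩ := hF z
    have hFd := (hd z).hasDerivAt
    have hm : F z * (1 - F z) ≤ F z := by nlinarith
    have hm' : F z * (1 - F z) ≤ 1 - F z := by nlinarith
    have hpos : 0 < F z * (1 - F z) := mul_pos h0 (by linarith)
    cases b with
    | true =>
      refine ⟨-(deriv F z / F z), ?_, ?_⟩
      · have : fl F true = fun x => - Real.log (F x) := by
          funext x; simp [fl]
        rw [this]
        exact (hFd.log h0.ne').neg
      · rw [abs_neg, abs_div, abs_of_pos h0]
        exact (div_le_div_of_nonneg_left (abs_nonneg _) hpos hm).trans (hL' z hz)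
    | false =>
      refine ⟨-(-(deriv F z) / (1 - F z)), ?_, ?_⟩
      · have : fl F false = fun x => - Real.log (1 - F x) := by
          funext x; simp [fl]
        rw [this]
        exact ((hFd.const_sub 1).log (by linarith)).neg
      · rw [abs_neg, abs_div, abs_neg, abs_of_pos (show 0 < 1 - F z by linarith)]
        exact (div_le_div_of_nonneg_left (abs_nonneg _) hpos hm').trans (hL' z hz)
  choose! d hd1 hd2 using key
  have := Convex.norm_image_sub_le_of_norm_hasDerivWithin_le (f := fl F b) (f' := d) (C := L)
    (s := Set.Icc (-α) α) (x := y) (y := x) (fun z hz => (hd1 z hz).hasDerivWithinAt)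
    (fun z hz => hd2 z hz) (convex_Icc _ _) hy hx
  simpa [Real.norm_eq_abs] using this

/-- variance stabilising transform -/
noncomputable def thetaF (F : ℝ → ℝ) (x : ℝ) : ℝ := Real.arcsin (√(F x))

lemma theta_lower (F : ℝ → ℝ) (α β : ℝ) (hd : Differentiable ℝ F) (hF : ∀ x, 0 < F x ∧ F x < 1)
    (hne : ∀ x ∈ Set.Icc (-α) α, deriv F x ≠ 0)
    (hβ : IsLUB ((fun x => F x * (1 - F x) / (deriv F x) ^ 2) '' Set.Icc (-α) α) β)
    (x y : ℝ) (hx : x ∈ Set.Icc (-α) α) (hy : y ∈ Set.Icc (-α) α) :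
    (x - y) ^ 2 ≤ 4 * β * (thetaF F x - thetaF F y) ^ 2 := by
  wlog hxy : x < y generalizing x y with H
  · rcases lt_or_eq_of_le (not_lt.mp hxy) with h | h
    · have := H y x hy hx h
      nlinarith
    · rw [h]; simp
  have hder : ∀ z, HasDerivAt (thetaF F)
      (1 / √(1 - √(F z) ^ 2) * (deriv F z / (2 * √(F z)))) z := by
    intro z
    obtain ⟨h0, h1⟩ := hF z
    have s0 : 0 < √(F z) := Real.sqrt_pos.mpr h0
    have s1 : √(F z) < 1 := by rw [Real.sqrt_lt' one_pos]; simpa using h1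
    exact (Real.hasDerivAt_arcsin (by linarith) s1.ne).comp z ((hd z).hasDerivAt.sqrt h0.ne')
  obtain ⟨c, hc, he⟩ := exists_hasDerivAt_eq_slope (thetaF F) _ hxy
    (fun z _ => (hder z).continuousAt.continuousWithinAt) (fun z _ => hder z)
  have hcI : c ∈ Set.Icc (-α) α := ⟨hx.1.trans hc.1.le, hc.2.le.trans hy.2⟩
  obtain ⟨h0, h1⟩ := hF c
  have hb : F c * (1 - F c) / (deriv F c) ^ 2 ≤ β := hβ.1 ⟨c, hcI, rfl⟩
  have hn := hne c hcI
  have hn2 : 0 < deriv F c ^ 2 := by positivity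
  have hyx : y - x ≠ 0 := by linarith
  rw [eq_div_iff hyx] at he
  have e2 : (thetaF F x - thetaF F y) ^ 2 = (deriv F c) ^ 2 / (4 * (F c * (1 - F c))) * (x - y) ^ 2 := by
    have : thetaF F x - thetaF F y = -(thetaF F y - thetaF F x) := by ring
    rw [this, ← he, neg_sq, mul_pow, mul_pow, div_pow, div_pow, mul_pow, Real.sq_sqrt h0.le,
      Real.sq_sqrt (by linarith)]
    have : 1 - F c ≠ 0 := by linarith
    field_simp
    ring
  rw [div_le_iff₀ hn2] at hb
  have hpos : 0 < F c * (1 - F c) := mul_pos h0 (by linarith)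
  rw [e2]
  have : 1 ≤ 4 * β * (deriv F c ^ 2 / (4 * (F c * (1 - F c)))) := by
    rw [show 4 * β * (deriv F c ^ 2 / (4 * (F c * (1 - F c))))
      = β * deriv F c ^ 2 / (F c * (1 - F c)) by field_simp]
    rwa [one_le_div hpos]
  calc (x - y) ^ 2 = 1 * (x - y) ^ 2 := by ring
    _ ≤ (4 * β * (deriv F c ^ 2 / (4 * (F c * (1 - F c))))) * (x - y) ^ 2 :=
        mul_le_mul_of_nonneg_right this (sq_nonneg _)
    _ = _ := by ring

lemma kl_half (p q : ℝ) (hp : 0 < p) (hq : 0 < q) :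
    2 * p - 2 * (√p * √q) ≤ p * (Real.log (1 / q) - Real.log (1 / p)) := by
  have sp := Real.sqrt_pos.mpr hp
  have sq := Real.sqrt_pos.mpr hq
  have h := Real.log_le_sub_one_of_pos (div_pos sq sp)
  rw [Real.log_div sq.ne' sp.ne', Real.log_sqrt hq.le, Real.log_sqrt hp.le] at h
  simp only [one_div, Real.log_inv]
  have e : p * (√q / √p) = √p * √q := by
    field_simp
    rw [Real.sq_sqrt hp.le]
  have := mul_le_mul_of_nonneg_left h hp.le
  rw [mul_sub, mul_sub, e] at this
  linarith

lemma kl_lower (F : ℝ → ℝ) (hF : ∀ x, 0 < F x ∧ F x < 1) (x y : ℝ) :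
    2 / 5 * (thetaF F x - thetaF F y) ^ 2 ≤
      F x * (fl F true y - fl F true x) + (1 - F x) * (fl F false y - fl F false x) := by
  obtain ⟨p0, p1⟩ := hF x
  obtain ⟨q0, q1⟩ := hF y
  have h1 := kl_half (F x) (F y) p0 q0
  have h2 := kl_half (1 - F x) (1 - F y) (by linarith) (by linarith)
  have hc : Real.cos (thetaF F x - thetaF F y) =
      √(1 - F x) * √(1 - F y) + √(F x) * √(F y) := by
    have r : ∀ z, Real.sin (thetaF F z) = √(F z) := fun z =>
      Real.sin_arcsin (by linarith [Real.sqrt_nonneg (F z)])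
        (Real.sqrt_le_one.mpr (hF z).2.le)
    have r' : ∀ z, Real.cos (thetaF F z) = √(1 - F z) := fun z => by
      rw [thetaF, Real.cos_arcsin, Real.sq_sqrt (hF z).1.le]
    rw [Real.cos_sub, r, r, r', r']
  have hu : |thetaF F x - thetaF F y| ≤ Real.pi := by
    have a1 := Real.arcsin_le_pi_div_two (√(F x))
    have a2 := Real.arcsin_le_pi_div_two (√(F y))
    have b1 := Real.neg_pi_div_two_le_arcsin (√(F x))
    have b2 := Real.neg_pi_div_two_le_arcsin (√(F y))
    rw [abs_le]; unfold thetaF; constructor <;> linarith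
  have hq := Real.cos_le_one_sub_mul_cos_sq hu
  have hpi : (1:ℝ) / 5 ≤ 2 / Real.pi ^ 2 := by
    rw [div_le_div_iff₀ (by norm_num) (by positivity)]
    nlinarith [Real.pi_lt_d2, Real.pi_pos]
  have := mul_le_mul_of_nonneg_right hpi (sq_nonneg (thetaF F x - thetaF F y))
  simp only [fl, if_true, Bool.false_eq_true, if_false]
  linarith

lemma linf_mem {d1 d2 : ℕ} (M : Matrix (Fin d1) (Fin d2) ℝ) (α : ℝ) (h : linfNorm M ≤ α)
    (k : Fin d1) (l : Fin d2) : M k l ∈ Set.Icc (-α) α := by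
  rw [Set.mem_Icc, ← abs_le]
  refine le_trans ?_ h
  unfold linfNorm
  refine le_trans ?_ (le_ciSup (f := fun k => ⨆ l, |M k l|) (Set.finite_range _).bddAbove k)
  exact le_ciSup (f := fun l => |M k l|) (Set.finite_range _).bddAbove l

lemma row_le {n k : ℕ} (U : Matrix (Fin n) (Fin k) ℝ) (i : Fin n) :
    ∑ j, U i j ^ 2 ≤ rowMaxNorm U ^ 2 := by
  have h : √(∑ j, U i j ^ 2) ≤ rowMaxNorm U :=
    le_ciSup (f := fun i => √(∑ j, U i j ^ 2)) (Set.finite_range _).bddAbove i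
  exact Real.sqrt_le_left (le_trans (Real.sqrt_nonneg _) h) |>.mp h

lemma row_nonneg {n k : ℕ} (U : Matrix (Fin n) (Fin k) ℝ) : 0 ≤ rowMaxNorm U :=
  Real.iSup_nonneg fun _ => Real.sqrt_nonneg _

lemma maxNorm_dual {d1 d2 : ℕ} (hd2 : 1 ≤ d2) (M : Matrix (Fin d1) (Fin d2) ℝ) (R : ℝ)
    (h : maxNorm M ≤ R) (A : Fin d1 → Fin d2 → ℝ) :
    |∑ i, ∑ j, A i j * M i j| ≤ R * sSup (gset A) := by
  have hg := g_nonneg A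
  have key : ∀ ε > 0, |∑ i, ∑ j, A i j * M i j| ≤ (R + ε) * sSup (gset A) := by
    intro ε hε
    have hne : { c : ℝ | ∃ (k : ℕ) (U : Matrix (Fin d1) (Fin k) ℝ) (V : Matrix (Fin d2) (Fin k) ℝ),
        0 < k ∧ M = U * Vᵀ ∧ c = rowMaxNorm U * rowMaxNorm V }.Nonempty :=
      ⟨_, d2, M, 1, hd2, by simp, rfl⟩
    obtain ⟨c, ⟨k, U, V, _, hM, rfl⟩, hc⟩ := exists_lt_of_csInf_lt hne
      (show maxNorm M < R + ε by linarith)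
    have e1 : ∑ i, ∑ j, A i j * M i j = bval A (fun i q => U i q) (fun j q => V j q) := by
      rw [hM]; rfl
    have e2 : -∑ i, ∑ j, A i j * M i j = bval A (fun i q => -U i q) (fun j q => V j q) := by
      rw [e1]; simp [bval]
    have b1 := g_hom A (fun i q => U i q) (fun j q => V j q) _ _ (row_le U) (row_le V)
    have b2 := g_hom A (fun i q => -U i q) (fun j q => V j q) _ _
      (fun i => by simpa using row_le U i) (row_le V)
    rw [Real.sqrt_sq (row_nonneg _), Real.sqrt_sq (row_nonneg _)] at b1 b2
    have := mul_le_mul_of_nonneg_right hc.le hg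
    rw [abs_le]; constructor <;> linarith
  refine le_of_forall_pos_le_add fun δ hδ => ?_
  have := key (δ / (sSup (gset A) + 1)) (by positivity)
  have h3 : δ / (sSup (gset A) + 1) * sSup (gset A) ≤ δ := by
    rw [div_mul_eq_mul_div, div_le_iff₀ (by positivity)]; nlinarith
  linarith
lemma sum_count {d1 d2 n : ℕ} (S : Fin n → Fin d1 × Fin d2) (e : Fin n → Bool)
    (G : Fin d1 → Fin d2 → ℝ) :
    ∑ k, ∑ l, (∑ t, if S t = (k, l) then bsgn (e t) else 0) * G k l =
      ∑ t, bsgn (e t) * G (S t).1 (S t).2 := by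
  rw [← Fintype.sum_prod_type' (f := fun k l => (∑ t, if S t = (k, l) then bsgn (e t) else 0) * G k l)]
  simp only [Finset.sum_mul]
  rw [Finset.sum_comm]
  refine Finset.sum_congr rfl fun t _ => ?_
  simp [ite_mul]

lemma rad_max {d1 d2 n : ℕ} {ι : Type*} [Fintype ι] [Nonempty ι] (S : Fin n → Fin d1 × Fin d2)
    (X : ι → Fin d1 → Fin d2 → ℝ) (κ K : ℝ) (hκ : 0 ≤ κ) (hK : 0 ≤ K)
    (hX : ∀ i A, ∑ k, ∑ l, A k l * X i k l ≤ K * sSup (gset A)) :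
    ∑ e : Fin n → Bool, (1/2) ^ n *
      Real.exp (mx fun i => 0 + 2 * ∑ t, bsgn (e t) * (κ * X i (S t).1 (S t).2)) ≤
    2 ^ (d1 + d2) * Real.exp (n * (192 * κ * K) ^ 2 / 2) := by
  set c := 192 * κ * K with hc
  have hc0 : 0 ≤ c := by positivity
  have key : ∀ e : Fin n → Bool,
      Real.exp (mx fun i => 0 + 2 * ∑ t, bsgn (e t) * (κ * X i (S t).1 (S t).2)) ≤
      ∑ st : (Fin d1 → Bool) × (Fin d2 → Bool),
        Real.exp (c * ∑ t, bsgn (e t) * (bsgn (st.1 (S t).1) * bsgn (st.2 (S t).2))) := by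
    intro e
    let A : Fin d1 → Fin d2 → ℝ := fun k l => ∑ t, if S t = (k, l) then bsgn (e t) else 0
    let W : (Fin d1 → Bool) × (Fin d2 → Bool) → ℝ := fun st =>
      ∑ t, bsgn (e t) * (bsgn (st.1 (S t).1) * bsgn (st.2 (S t).2))
    have hG := groth A (mx W) (fun s t => by
      rw [sum_count S e (fun k l => bsgn (s k) * bsgn (t l))]
      exact le_mx W (s, t))
    obtain ⟨st, hst⟩ := mx_att W
    have h1 : (mx fun i => 0 + 2 * ∑ t, bsgn (e t) * (κ * X i (S t).1 (S t).2)) ≤ c * W st := by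
      refine mx_le _ _ fun i => ?_
      have h2 := hX i A
      rw [sum_count S e (X i)] at h2
      have e1 : ∑ t, bsgn (e t) * (κ * X i (S t).1 (S t).2) =
          κ * ∑ t, bsgn (e t) * X i (S t).1 (S t).2 := by
        rw [Finset.mul_sum]; exact Finset.sum_congr rfl fun _ _ => by ring
      rw [e1, ← hst]
      have h3 := mul_le_mul_of_nonneg_left hG hK
      have h4 := mul_le_mul_of_nonneg_left (h2.trans h3) hκ
      rw [hc]; linarith
    refine (Real.exp_le_exp.mpr h1).trans ?_
    exact Finset.single_le_sum (f := fun st => Real.exp (c * W st))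
      (fun _ _ => (Real.exp_pos _).le) (Finset.mem_univ st)
  calc _ ≤ ∑ e : Fin n → Bool, (1/2) ^ n * ∑ st : (Fin d1 → Bool) × (Fin d2 → Bool),
        Real.exp (c * ∑ t, bsgn (e t) * (bsgn (st.1 (S t).1) * bsgn (st.2 (S t).2))) :=
        Finset.sum_le_sum fun e _ => mul_le_mul_of_nonneg_left (key e) (by positivity)
    _ = ∑ st : (Fin d1 → Bool) × (Fin d2 → Bool), ∑ e : Fin n → Bool, (1/2) ^ n *
        Real.exp (c * ∑ t, bsgn (e t) * (bsgn (st.1 (S t).1) * bsgn (st.2 (S t).2))) := by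
        simp only [Finset.mul_sum]
        rw [Finset.sum_comm]
    _ ≤ ∑ st : (Fin d1 → Bool) × (Fin d2 → Bool), Real.exp (n * c ^ 2 / 2) := by
        refine Finset.sum_le_sum fun st _ => rad_mgf n c _ fun t => ?_
        rw [mul_pow, pow_two, pow_two, bsgn_sq, bsgn_sq, one_mul]
    _ = _ := by
        simp [pow_add]

lemma exp_tail (d : ℕ) (hd : 1 ≤ d) :
    2 ^ d * Real.exp (d / 2) ≤ 4 / (d : ℝ) * Real.exp (3 * d) := by
  have h2 : (2:ℝ) ^ d ≤ Real.exp d := by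
    have : (2:ℝ) ≤ Real.exp 1 := by have := Real.add_one_le_exp (1:ℝ); linarith
    calc (2:ℝ) ^ d ≤ Real.exp 1 ^ d := by gcongr
      _ = Real.exp d := by rw [← Real.exp_nat_mul, mul_one]
  have hd0 : (0:ℝ) < d := by exact_mod_cast hd
  have h3 : (d:ℝ) ≤ Real.exp d := by have := Real.add_one_le_exp (d:ℝ); linarith
  rw [div_mul_eq_mul_div, le_div_iff₀ hd0]
  calc 2 ^ d * Real.exp (d / 2) * d ≤ Real.exp d * Real.exp d * Real.exp d := by
        gcongr; linarith
    _ = Real.exp (3 * d) := by rw [← Real.exp_add, ← Real.exp_add]; congr 1; ring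
    _ ≤ 4 * Real.exp (3 * d) := by linarith [Real.exp_pos (3 * (d:ℝ))]

/-- abstract tail bound -/
lemma tail_bound {Γ : Type*} [Fintype Γ] (P Z : Γ → ℝ) (hP : ∀ w, 0 ≤ P w) (hs : ∑ w, P w = 1)
    (G : Set Γ) (τ B δ : ℝ) (hG : ∀ w, w ∉ G → τ ≤ Z w) (hB : ∑ w, P w * Real.exp (Z w) ≤ B)
    (hδ : B ≤ δ * Real.exp τ) : 1 - δ ≤ ∑ w, G.indicator P w := by
  have h1 : ∀ w, (P w - G.indicator P w) * Real.exp τ ≤ P w * Real.exp (Z w) := by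
    intro w
    by_cases hw : w ∈ G
    · rw [Set.indicator_of_mem hw, sub_self, zero_mul]
      exact mul_nonneg (hP w) (Real.exp_pos _).le
    · rw [Set.indicator_of_notMem hw, sub_zero]
      exact mul_le_mul_of_nonneg_left (Real.exp_le_exp.mpr (hG w hw)) (hP w)
  have h2 := Finset.sum_le_sum fun w (_ : w ∈ Finset.univ) => h1 w
  rw [← Finset.sum_mul, Finset.sum_sub_distrib, hs] at h2
  have := le_of_mul_le_mul_right (h2.trans (hB.trans hδ)) (Real.exp_pos τ)
  linarith
/-- Frobenius-norm upper bound for the max-norm constrained MLE of 1-bit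
matrix completion when each entry is sampled with probability at least `1/(μ d1 d2)`.
There is an absolute constant `C > 0` such that, with probability at least `1 − 4/d`,
`(1/(d1 d2)) ‖M̂ − M*‖_F² ≤ C μ β_α { L_α R √(d/n) + U_α √(log(d)/n) }`, `d = d1 + d2`. -/
theorem maxNorm_MLE_frobenius_upper_bound :
    ∃ C : ℝ, 0 < C ∧
      ∀ (d1 d2 n : ℕ) (α R μ : ℝ) (F : ℝ → ℝ) (π : Fin d1 → Fin d2 → ℝ)
        (Mstar : Matrix (Fin d1) (Fin d2) ℝ) (Lα βα Uα : ℝ)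
        (Mhat : (Fin n → Fin d1 × Fin d2) → (Fin n → Bool) →
          Matrix (Fin d1) (Fin d2) ℝ),
        1 ≤ d1 → 1 ≤ d2 → 2 < n → n ≤ d1 * d2 → 0 < α → 0 < R →
        Differentiable ℝ F → (∀ x, 0 < F x ∧ F x < 1) →
        (∀ x ∈ Set.Icc (-α) α, deriv F x ≠ 0) →
        IsLUB ((fun x => |deriv F x| / (F x * (1 - F x))) '' Set.Icc (-α) α) Lα →
        IsLUB ((fun x => F x * (1 - F x) / (deriv F x) ^ 2) '' Set.Icc (-α) α) βα →
        IsLUB ((fun x => Real.log (1 / (F x * (1 - F x)))) '' Set.Icc (-α) α) Uα →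
        linfNorm Mstar ≤ α → maxNorm Mstar ≤ R →
        (∀ k l, 0 ≤ π k l) → (∑ k, ∑ l, π k l = 1) →
        1 ≤ μ → (∀ k l, 1 / (μ * d1 * d2) ≤ π k l) →
        (∀ (S : Fin n → Fin d1 × Fin d2) (y : Fin n → Bool),
          (linfNorm (Mhat S y) ≤ α ∧ maxNorm (Mhat S y) ≤ R) ∧
          ∀ M : Matrix (Fin d1) (Fin d2) ℝ, linfNorm M ≤ α → maxNorm M ≤ R →
            negLogLik F S y (Mhat S y) ≤ negLogLik F S y M) →
        1 - 4 / (d1 + d2 : ℝ) ≤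
          ∑ S : Fin n → Fin d1 × Fin d2, ∑ y : Fin n → Bool,
            Set.indicator
              { p : (Fin n → Fin d1 × Fin d2) × (Fin n → Bool) |
                frobeniusNorm (Mhat p.1 p.2 - Mstar) ^ 2 / (d1 * d2 : ℝ) ≤
                  C * μ * βα * (Lα * R * Real.sqrt ((d1 + d2 : ℝ) / n) +
                    Uα * Real.sqrt (Real.log (d1 + d2 : ℝ) / n)) }
              (fun p => sampleWeight F π Mstar p.1 p.2) (S, y) := by
  refine ⟨11520, by norm_num, ?_⟩
  intro d1 d2 n α R μ F π Mstar L β Uα Mhat hd1 hd2 hn _hnd hα hR hdiff hF hne hL hβ hU hMs1 hMs2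
    hπ0 hπ1 hμ hπμ hMhat
  have h0mem : (0:ℝ) ∈ Set.Icc (-α) α := ⟨by linarith, hα.le⟩
  have hFF : ∀ x, 0 < F x * (1 - F x) := fun x => mul_pos (hF x).1 (by linarith [(hF x).2])
  have hLpos : 0 < L :=
    lt_of_lt_of_le (div_pos (abs_pos.mpr (hne 0 h0mem)) (hFF 0)) (hL.1 ⟨0, h0mem, rfl⟩)
  have hβpos : 0 < β :=
    lt_of_lt_of_le (div_pos (hFF 0) (by have := hne 0 h0mem; positivity)) (hβ.1 ⟨0, h0mem, rfl⟩)
  have hUnn : 0 ≤ Uα := by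
    refine le_trans ?_ (hU.1 ⟨0, h0mem, rfl⟩)
    apply Real.log_nonneg
    rw [one_le_div (hFF 0)]
    nlinarith [(hF 0).1, (hF 0).2]
  have hμ0 : 0 < μ := by linarith
  have hn0 : (0:ℝ) < n := by exact_mod_cast (by omega : 0 < n)
  have hd1' : (0:ℝ) < d1 := by exact_mod_cast hd1
  have hd2' : (0:ℝ) < d2 := by exact_mod_cast hd2
  set r : ℝ := √((d1 + d2 : ℝ) / n) with hr
  have hrpos : 0 < r := Real.sqrt_pos.mpr (by positivity)
  have hr2 : n * r ^ 2 = d1 + d2 := by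
    rw [hr, Real.sq_sqrt (by positivity)]; field_simp
  set lam : ℝ := r / (384 * L * R) with hlam
  have hlampos : 0 < lam := by positivity
  have hlamr : lam * L * R = r / 384 := by rw [hlam]; field_simp
  have : Nonempty (Fin d1) := ⟨⟨0, hd1⟩⟩
  have : Nonempty (Fin d2) := ⟨⟨0, hd2⟩⟩
  -- single-sample distribution
  let p : (Fin d1 × Fin d2) × Bool → ℝ := fun w =>
    π w.1.1 w.1.2 * (if w.2 then F (Mstar w.1.1 w.1.2) else 1 - F (Mstar w.1.1 w.1.2))
  have hp0 : ∀ w, 0 ≤ p w := by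
    rintro ⟨⟨k, l⟩, b⟩
    refine mul_nonneg (hπ0 k l) ?_
    have := hF (Mstar k l)
    split_ifs <;> linarith
  have hpE : ∀ f : (Fin d1 × Fin d2) × Bool → ℝ, ∑ w, p w * f w = ∑ k, ∑ l, π k l *
      (F (Mstar k l) * f ((k, l), true) + (1 - F (Mstar k l)) * f ((k, l), false)) := by
    intro f
    rw [Fintype.sum_prod_type, Fintype.sum_prod_type]
    refine Finset.sum_congr rfl fun k _ => Finset.sum_congr rfl fun l _ => ?_
    simp only [Fintype.sum_bool, p, if_true, Bool.false_eq_true, if_false]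
    ring
  have hp1 : ∑ w, p w = 1 := by
    have := hpE (fun _ => 1)
    simp only [mul_one, add_sub_cancel] at this
    rw [this, hπ1]
  let ι := (Fin n → Fin d1 × Fin d2) × (Fin n → Bool)
  let X : ι → Fin d1 → Fin d2 → ℝ := fun i k l => Mhat i.1 i.2 k l - Mstar k l
  let h : ι → (Fin d1 × Fin d2) × Bool → ℝ := fun i w =>
    lam * (fl F w.2 (Mhat i.1 i.2 w.1.1 w.1.2) - fl F w.2 (Mstar w.1.1 w.1.2))
  let x : ι → (Fin d1 × Fin d2) × Bool → ℝ := fun i w => (lam * L) * X i w.1.1 w.1.2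
  have memS := linf_mem Mstar α hMs1
  have memH : ∀ i : ι, ∀ k l, Mhat i.1 i.2 k l ∈ Set.Icc (-α) α := fun i =>
    linf_mem _ α (hMhat i.1 i.2).1.1
  have h1 : ∀ w i, |h i w| ≤ |x i w| := by
    intro w i
    simp only [h, x, X, abs_mul, abs_of_pos hlampos, abs_of_pos hLpos, mul_assoc]
    exact mul_le_mul_of_nonneg_left (fl_lip F α L hdiff hF hL _ _ _ (memH i _ _) (memS _ _))
      hlampos.le
  have h2 : ∀ w i j, |h i w - h j w| ≤ |x i w - x j w| := by
    intro w i j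
    have e1 : h i w - h j w = lam * (fl F w.2 (Mhat i.1 i.2 w.1.1 w.1.2) -
        fl F w.2 (Mhat j.1 j.2 w.1.1 w.1.2)) := by simp only [h]; ring
    have e2 : x i w - x j w = lam * (L * (Mhat i.1 i.2 w.1.1 w.1.2 -
        Mhat j.1 j.2 w.1.1 w.1.2)) := by simp only [x, X]; ring
    rw [e1, e2]
    simp only [abs_mul, abs_of_pos hlampos, abs_of_pos hLpos]
    exact mul_le_mul_of_nonneg_left (fl_lip F α L hdiff hF hL _ _ _ (memH i _ _) (memH j _ _))
      hlampos.le
  have hX : ∀ i A, ∑ k, ∑ l, A k l * X i k l ≤ (2 * R) * sSup (gset A) := by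
    intro i A
    have a1 := (abs_le.mp (maxNorm_dual hd2 _ R (hMhat i.1 i.2).1.2 A)).2
    have a2 := (abs_le.mp (maxNorm_dual hd2 _ R hMs2 A)).1
    simp only [X, mul_sub, Finset.sum_sub_distrib]
    linarith
  let Z : ι → ℝ := fun q => mx fun i : ι => 0 + ∑ t, (∑ v, p v * h i v - h i (q.1 t, q.2 t))
  let eqv := Equiv.arrowProdEquivProdArrow (Fin n) (fun _ => Fin d1 × Fin d2) (fun _ => Bool)
  have hsw : ∀ w : Fin n → (Fin d1 × Fin d2) × Bool,
      sampleWeight F π Mstar (eqv w).1 (eqv w).2 = ∏ t, p (w t) := fun w => rfl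
  have hPsum : ∑ w : Fin n → (Fin d1 × Fin d2) × Bool, ∏ t, p (w t) = 1 := by
    have := Finset.prod_univ_sum (fun _ : Fin n => (Finset.univ : Finset ((Fin d1 × Fin d2) × Bool)))
      (fun _ w => p w)
    rw [Fintype.piFinset_univ] at this
    rw [← this, hp1]; simp
  have main := symm_contr p hp0 hp1 h x h1 h2 n (fun _ => 0)
  have main2 : ∑ w : Fin n → (Fin d1 × Fin d2) × Bool, (∏ t, p (w t)) *
      ∑ e : Fin n → Bool, (1/2) ^ n *
      Real.exp (mx fun i => 0 + 2 * ∑ t, bsgn (e t) * x i (w t)) ≤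
      2 ^ (d1 + d2) * Real.exp (((d1 + d2 : ℕ) : ℝ) / 2) := by
    have hc : (n:ℝ) * (192 * (lam * L) * (2 * R)) ^ 2 / 2 = ((d1 + d2 : ℕ) : ℝ) / 2 := by
      have : 192 * (lam * L) * (2 * R) = r := by linarith
      rw [this, hr2]; push_cast; rfl
    calc _ ≤ ∑ w : Fin n → (Fin d1 × Fin d2) × Bool, (∏ t, p (w t)) *
          (2 ^ (d1 + d2) * Real.exp (((d1 + d2 : ℕ) : ℝ) / 2)) := by
          refine Finset.sum_le_sum fun w _ => mul_le_mul_of_nonneg_left ?_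
            (Finset.prod_nonneg fun t _ => hp0 _)
          rw [← hc]
          exact rad_max (fun t => (w t).1) X (lam * L) (2 * R) (by positivity) (by positivity) hX
      _ = _ := by rw [← Finset.sum_mul, hPsum, one_mul]
  rw [← Fintype.sum_prod_type']
  have hcast : (d1 + d2 : ℝ) = ((d1 + d2 : ℕ) : ℝ) := by push_cast; rfl
  have hfin := tail_bound (Γ := ι) (fun q => sampleWeight F π Mstar q.1 q.2) Z
    (fun q => Finset.prod_nonneg fun t _ => hp0 (q.1 t, q.2 t))
    (by rw [← eqv.sum_comp]; exact hPsum)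
    { p : (Fin n → Fin d1 × Fin d2) × (Fin n → Bool) |
                frobeniusNorm (Mhat p.1 p.2 - Mstar) ^ 2 / (d1 * d2 : ℝ) ≤
                  11520 * μ * β * (L * R * r +
                    Uα * Real.sqrt (Real.log (d1 + d2 : ℝ) / n)) }
    (3 * ((d1 + d2 : ℕ) : ℝ)) _ (4 / ((d1 + d2 : ℕ) : ℝ)) ?_
    (by rw [← eqv.sum_comp]; exact main.trans main2) (exp_tail (d1 + d2) (by omega))
  · rw [hcast] at hfin ⊢
    exact hfin
  intro q hq
  rw [Set.mem_ofPred_eq, not_le] at hq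
  refine le_trans ?_ (le_mx (fun i : ι => 0 + ∑ t, (∑ v, p v * h i v - h i (q.1 t, q.2 t))) q)
  simp only [zero_add]
  rw [Finset.sum_sub_distrib, Finset.sum_const, Finset.card_univ, Fintype.card_fin, nsmul_eq_mul]
  have hopt : ∑ t, h q (q.1 t, q.2 t) ≤ 0 := by
    have := (hMhat q.1 q.2).2 Mstar hMs1 hMs2
    have e1 : ∑ t, h q (q.1 t, q.2 t) =
        lam * (negLogLik F q.1 q.2 (Mhat q.1 q.2) - negLogLik F q.1 q.2 Mstar) := by
      simp only [h, ← Finset.mul_sum, Finset.sum_sub_distrib]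
      rfl
    rw [e1]
    exact mul_nonpos_of_nonneg_of_nonpos hlampos.le (by linarith)
  have hfro : frobeniusNorm (Mhat q.1 q.2 - Mstar) ^ 2 = ∑ k, ∑ l, (X q k l) ^ 2 := by
    unfold frobeniusNorm
    refine Eq.trans (Real.sq_sqrt ?_) rfl
    exact Finset.sum_nonneg fun _ _ => Finset.sum_nonneg fun _ _ => sq_nonneg _
  have hE : lam / (10 * β * μ) * ((∑ k, ∑ l, (X q k l) ^ 2) / (d1 * d2)) ≤ ∑ v, p v * h q v := by
    rw [hpE, Finset.sum_div, Finset.mul_sum]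
    refine Finset.sum_le_sum fun k _ => ?_
    rw [Finset.sum_div, Finset.mul_sum]
    refine Finset.sum_le_sum fun l _ => ?_
    have k1 := kl_lower F hF (Mstar k l) (Mhat q.1 q.2 k l)
    have k2 := theta_lower F α β hdiff hF hne hβ _ _ (memS k l) (memH q k l)
    have k3 : (X q k l) ^ 2 / (10 * β) ≤ F (Mstar k l) * (fl F true (Mhat q.1 q.2 k l) -
        fl F true (Mstar k l)) + (1 - F (Mstar k l)) * (fl F false (Mhat q.1 q.2 k l) -
        fl F false (Mstar k l)) := by
      refine le_trans ?_ k1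
      rw [div_le_iff₀ (by positivity)]
      have : (X q k l) ^ 2 = (Mstar k l - Mhat q.1 q.2 k l) ^ 2 := by simp only [X]; ring
      rw [this]; linarith
    calc lam / (10 * β * μ) * ((X q k l) ^ 2 / (d1 * d2))
        = (1 / (μ * d1 * d2)) * (lam * ((X q k l) ^ 2 / (10 * β))) := by field_simp
      _ ≤ π k l * (lam * (F (Mstar k l) * (fl F true (Mhat q.1 q.2 k l) -
        fl F true (Mstar k l)) + (1 - F (Mstar k l)) * (fl F false (Mhat q.1 q.2 k l) -
        fl F false (Mstar k l)))) := by
          refine mul_le_mul (hπμ k l) (mul_le_mul_of_nonneg_left k3 hlampos.le) ?_ (hπ0 k l)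
          positivity
      _ = _ := by simp only [h]; ring
  rw [hfro] at hq
  have hq2 : 11520 * μ * β * (L * R * r) ≤ (∑ k, ∑ l, (X q k l) ^ 2) / (d1 * d2 : ℝ) := by
    refine le_trans ?_ hq.le
    refine mul_le_mul_of_nonneg_left ?_ (by positivity)
    have : 0 ≤ Uα * √(Real.log (d1 + d2 : ℝ) / n) := mul_nonneg hUnn (Real.sqrt_nonneg _)
    linarith
  have hq3 := mul_le_mul_of_nonneg_left hq2
    (show 0 ≤ lam / (10 * β * μ) by positivity)
  have e4 : lam / (10 * β * μ) * (11520 * μ * β * (L * R * r)) = 3 * r ^ 2 := by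
    rw [show lam / (10 * β * μ) * (11520 * μ * β * (L * R * r)) = 1152 * (lam * L * R) * r by
      field_simp; ring, hlamr]
    ring
  rw [e4] at hq3
  have := mul_le_mul_of_nonneg_left (hq3.trans hE) hn0.le
  rw [← hcast, ← hr2]
  linarith
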